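/- Let α > 0, let V : ℝ → ℝ be differentiable, let ξ : [0, ∞) → ℝ be continuous, and let Z : [0, ∞) → ℝ be differentiable with Z'(t) = -α Z(t) + ξ(t). Suppose Q : [0, ∞) → ℝ is twice differentiable and satisfies the integro-differential equation Q''(t) + V'(Q(t)) + ∫₀^t e^{-α(t-s)} Q'(s) ds = Z(t) for all t ≥ 0. Define P := Q' and S(t) := Q''(t) + V'(Q(t)). Then S(0) = Z(0), P'(t) = S(t) - V'(Q(t)), and S is differentiable with S'(t) = -α S(t) - P(t) + ξ(t) for all t ≥ 0. -/

import Mathlib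

/-!
The memory integral `M t = ∫ s in 0..t, exp (-α * (t - s)) • P s` is the Duhamel solution of the
linear equation `M' = -α • M + P` with `M 0 = 0`: factoring `exp (-α * t)` out of the kernel, one
needs only the product rule and the fundamental theorem of calculus. The integro-differential
equation says `S = Z - M`, so `S` inherits the value of `Z` at `0`, and subtracting the equations
for `Z` and `M` gives the one for `S`.
-/

open Real Set

section Duhamel

open Filter Topology

variable {E : Type*} [NormedAddCommGroup E] [NormedSpace ℝ E]

theorem integral_exp_mul_sub_smul (μ : ℝ) (f : ℝ → E) (a t : ℝ) :
    ∫ r in a..t, exp (μ * (t - r)) • f r = exp (μ * t) • ∫ r in a..t, exp (-μ * r) • f r := by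
  rw [← intervalIntegral.integral_smul]
  congr! 2 with r
  rw [smul_smul, ← exp_add]
  ring_nf

variable [CompleteSpace E] {s : Set ℝ} {f : ℝ → E} {a t : ℝ}

theorem ftcFilter_nhdsWithin_of_ordConnected (hs : s.OrdConnected) (ht : t ∈ s) :
    intervalIntegral.FTCFilter t (𝓝[s] t) (𝓝[s] t) where
  toTendstoIxxClass :=
    haveI := hs
    tendstoIxxClass_of_subset (Ixx' := Icc) fun _ _ => Ioc_subset_Icc_self
  pure_le := pure_le_nhdsWithin ht
  le_nhds := inf_le_left
  meas_gen := hs.measurableSet.nhdsWithin_isMeasurablyGenerated t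

theorem hasDerivWithinAt_integral_of_continuousOn (hs : s.OrdConnected) (hf : ContinuousOn f s)
    (ha : a ∈ s) (ht : t ∈ s) :
    HasDerivWithinAt (fun u => ∫ r in a..u, f r) (f t) s t :=
  haveI := ftcFilter_nhdsWithin_of_ordConnected hs ht
  intervalIntegral.integral_hasDerivWithinAt_right
    (hf.mono (hs.uIcc_subset ha ht)).intervalIntegrable
    (hf.stronglyMeasurableAtFilter_nhdsWithin hs.measurableSet t) (hf t ht)

theorem hasDerivWithinAt_integral_exp_mul_sub_smul (μ : ℝ) (hs : s.OrdConnected)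
    (hf : ContinuousOn f s) (ha : a ∈ s) (ht : t ∈ s) :
    HasDerivWithinAt (fun u => ∫ r in a..u, exp (μ * (u - r)) • f r)
      (μ • (∫ r in a..t, exp (μ * (t - r)) • f r) + f t) s t := by
  have h_exp : HasDerivWithinAt (fun u => exp (μ * u)) (exp (μ * t) * μ) s t :=
    (hasDerivAt_const_mul μ).exp.hasDerivWithinAt
  have h_integral : HasDerivWithinAt (fun u => ∫ r in a..u, exp (-μ * r) • f r)
      (exp (-μ * t) • f t) s t :=
    hasDerivWithinAt_integral_of_continuousOn hs (by fun_prop) ha ht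
  have h_cancel : exp (μ * t) * exp (-μ * t) = 1 := by
    rw [← exp_add, neg_mul, add_neg_cancel, exp_zero]
  simp only [integral_exp_mul_sub_smul μ f]
  refine (h_exp.smul h_integral).congr_deriv ?_
  rw [smul_smul, h_cancel, one_smul, smul_smul, mul_comm μ (exp _), add_comm]

end Duhamel

theorem integro_differential_implies_augmented_system_general {E : Type*} [NormedAddCommGroup E]
    [NormedSpace ℝ E] [CompleteSpace E] (α : ℝ) (F : E → E) (ξ Z Q P A S : ℝ → E)
    (hZ : ∀ t ∈ Ici (0 : ℝ), HasDerivWithinAt Z (-α • Z t + ξ t) (Ici 0) t)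
    (hQ : ∀ t ∈ Ici (0 : ℝ), HasDerivWithinAt Q (P t) (Ici 0) t)
    (hP : ∀ t ∈ Ici (0 : ℝ), HasDerivWithinAt P (A t) (Ici 0) t)
    (heq : ∀ t ∈ Ici (0 : ℝ),
      A t + F (Q t) + (∫ s in (0 : ℝ)..t, exp (-α * (t - s)) • P s) = Z t)
    (hS : ∀ t ∈ Ici (0 : ℝ), S t = A t + F (Q t)) :
    S 0 = Z 0 ∧
    (∀ t ∈ Ici (0 : ℝ), HasDerivWithinAt P (S t - F (Q t)) (Ici 0) t) ∧
    ∀ t ∈ Ici (0 : ℝ), HasDerivWithinAt S (-α • S t - P t + ξ t) (Ici 0) t := by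
  have hP_cont : ContinuousOn P (Ici 0) := HasDerivWithinAt.continuousOn hP
  have hS_eq : ∀ t ∈ Ici (0 : ℝ), S t = Z t - ∫ s in (0 : ℝ)..t, exp (-α * (t - s)) • P s :=
    fun t ht => by rw [hS t ht, ← heq t ht, add_sub_cancel_right]
  refine ⟨?_, fun t ht => ?_, fun t ht => ?_⟩
  · rw [hS_eq 0 self_mem_Ici, intervalIntegral.integral_same, sub_zero]
  · rw [hS t ht, add_sub_cancel_right]
    exact hP t ht
  · have h_memory := hasDerivWithinAt_integral_exp_mul_sub_smul (-α) ordConnected_Ici hP_cont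
      self_mem_Ici ht
    refine (((hZ t ht).sub h_memory).congr_of_mem hS_eq ht).congr_deriv ?_
    rw [hS_eq t ht, smul_sub]
    abel

/-- From the integro-differential equation
`Q''(t) + V'(Q(t)) + ∫₀^t e^{-α(t-s)} Q'(s) ds = Z(t)` (with `Z' = -αZ + ξ`),
the variables `P := Q'` and `S := Q'' + V'(Q)` satisfy the augmented Markovian
system: `S(0) = Z(0)`, `P' = S - V'(Q)`, and `S' = -αS - P + ξ` on `[0, ∞)`. -/
theorem integro_differential_implies_augmented_system (α : ℝ) (hα : 0 < α)
    (V : ℝ → ℝ) (hV : Differentiable ℝ V) (ξ Z Q : ℝ → ℝ)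
    (hξ : ContinuousOn ξ (Ici 0))
    (hZ : ∀ t ∈ Ici (0:ℝ), HasDerivWithinAt Z (-α * Z t + ξ t) (Ici 0) t)
    (hQ : ∀ t ∈ Ici (0:ℝ), DifferentiableWithinAt ℝ Q (Ici 0) t)
    (hQ' : ∀ t ∈ Ici (0:ℝ), DifferentiableWithinAt ℝ (derivWithin Q (Ici 0)) (Ici 0) t)
    (heq : ∀ t ∈ Ici (0:ℝ),
      derivWithin (derivWithin Q (Ici 0)) (Ici 0) t + deriv V (Q t) +
          (∫ s in (0:ℝ)..t, Real.exp (-α * (t - s)) * derivWithin Q (Ici 0) s) = Z t)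
    (P S : ℝ → ℝ)
    (hPdef : ∀ t, P t = derivWithin Q (Ici 0) t)
    (hSdef : ∀ t, S t = derivWithin (derivWithin Q (Ici 0)) (Ici 0) t + deriv V (Q t)) :
    S 0 = Z 0 ∧
    (∀ t ∈ Ici (0:ℝ), HasDerivWithinAt P (S t - deriv V (Q t)) (Ici 0) t) ∧
    ∀ t ∈ Ici (0:ℝ), HasDerivWithinAt S (-α * S t - P t + ξ t) (Ici 0) t := by
  obtain rfl : P = derivWithin Q (Ici 0) := funext hPdef
  exact integro_differential_implies_augmented_system_general α (deriv V) ξ Z Q _ _ S hZ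
    (fun t ht => (hQ t ht).hasDerivWithinAt) (fun t ht => (hQ' t ht).hasDerivWithinAt) heq
    fun t _ => hSdef t
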